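/- Let ρ be a Hermitian positive definite d×d matrix, A a Hermitian positive semi-definite d×d matrix with tr(Aρ) > 0, and M any Hermitian d×d matrix. Then (tr(AM))² / (tr(Aρ))² ≤ tr(Mρ⁻¹Mρ⁻¹). Equivalently, the Hessian of f(ρ) = −log tr(Aρ) is dominated by the Hessian of R(ρ) = −log det ρ. -/

import Mathlib

open Matrix
open scoped ComplexOrder

/-!
Factor `ρ = Bᴴ * B` with `B` invertible. Since `tr(AM) = tr(BABᴴ · B⁻ᴴMB⁻¹)`, the Cauchy–Schwarz
inequality for the Hilbert–Schmidt inner product bounds `|tr(AM)|²` by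
`tr(AρAρ) · tr(Mᴴρ⁻¹Mρ⁻¹)`. The first factor is the trace of the square of the positive
semi-definite matrix `BABᴴ`, hence at most the square of its trace, which is `tr(Aρ)²`.
-/

section HilbertSchmidt

variable {l m n 𝕜 : Type*} [Fintype l] [Fintype m] [Fintype n] [RCLike 𝕜]

section Frobenius

open scoped Matrix.Norms.Frobenius

lemma norm_toLp_vec (X : Matrix m n 𝕜) : ‖WithLp.toLp 2 X.vec‖ = ‖X‖ := by
  rw [EuclideanSpace.norm_eq, frobenius_norm_def, Real.sqrt_eq_rpow, Fintype.sum_prod_type,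
    Finset.sum_comm]
  simp only [vec, Real.rpow_two]

lemma inner_toLp_vec (X Y : Matrix m n 𝕜) :
    inner 𝕜 (WithLp.toLp 2 X.vec) (WithLp.toLp 2 Y.vec) = (Xᴴ * Y).trace := by
  rw [EuclideanSpace.inner_toLp_toLp, dotProduct_comm, star_vec_dotProduct_vec]

lemma norm_trace_conjTranspose_mul_le (X Y : Matrix m n 𝕜) :
    ‖(Xᴴ * Y).trace‖ ≤ ‖X‖ * ‖Y‖ := by
  rw [← inner_toLp_vec, ← norm_toLp_vec X, ← norm_toLp_vec Y]
  exact norm_inner_le_norm _ _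

lemma re_trace_conjTranspose_mul_self (X : Matrix m n 𝕜) :
    RCLike.re (Xᴴ * X).trace = ‖X‖ ^ 2 := by
  rw [← inner_toLp_vec, inner_self_eq_norm_sq, norm_toLp_vec]

lemma re_trace_conjTranspose_mul_self_mul_conjTranspose_mul_self (C : Matrix m n 𝕜)
    (D : Matrix l n 𝕜) : RCLike.re (Cᴴ * C * (Dᴴ * D)).trace = ‖C * Dᴴ‖ ^ 2 := by
  rw [← re_trace_conjTranspose_mul_self, ← Matrix.mul_assoc, trace_mul_comm, conjTranspose_mul,
    conjTranspose_conjTranspose]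
  simp only [Matrix.mul_assoc]

lemma norm_trace_conjTranspose_mul_sq_le (X Y : Matrix m n 𝕜) :
    ‖(Xᴴ * Y).trace‖ ^ 2 ≤ RCLike.re (Xᴴ * X).trace * RCLike.re (Yᴴ * Y).trace := by
  rw [re_trace_conjTranspose_mul_self, re_trace_conjTranspose_mul_self, ← mul_pow]
  gcongr
  exact norm_trace_conjTranspose_mul_le X Y

lemma exists_eq_conjTranspose_mul_self_of_posSemidef {P : Matrix n n 𝕜} (hP : P.PosSemidef) :
    ∃ B : Matrix n n 𝕜, P = Bᴴ * B := by
  classical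
  open scoped MatrixOrder in
  exact CStarAlgebra.nonneg_iff_eq_star_mul_self.mp hP.nonneg

lemma re_trace_mul_nonneg_of_posSemidef {P Q : Matrix n n 𝕜} (hP : P.PosSemidef)
    (hQ : Q.PosSemidef) : 0 ≤ RCLike.re (P * Q).trace := by
  obtain ⟨C, rfl⟩ := exists_eq_conjTranspose_mul_self_of_posSemidef hP
  obtain ⟨D, rfl⟩ := exists_eq_conjTranspose_mul_self_of_posSemidef hQ
  rw [re_trace_conjTranspose_mul_self_mul_conjTranspose_mul_self]
  positivity

lemma re_trace_mul_le_of_posSemidef {P Q : Matrix n n 𝕜} (hP : P.PosSemidef)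
    (hQ : Q.PosSemidef) :
    RCLike.re (P * Q).trace ≤ RCLike.re P.trace * RCLike.re Q.trace := by
  obtain ⟨C, rfl⟩ := exists_eq_conjTranspose_mul_self_of_posSemidef hP
  obtain ⟨D, rfl⟩ := exists_eq_conjTranspose_mul_self_of_posSemidef hQ
  calc RCLike.re (Cᴴ * C * (Dᴴ * D)).trace
      = ‖C * Dᴴ‖ ^ 2 := re_trace_conjTranspose_mul_self_mul_conjTranspose_mul_self C D
    _ ≤ (‖C‖ * ‖Dᴴ‖) ^ 2 := by gcongr; exact frobenius_norm_mul C Dᴴ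
    _ = RCLike.re (Cᴴ * C).trace * RCLike.re (Dᴴ * D).trace := by
      rw [frobenius_norm_conjTranspose, mul_pow, re_trace_conjTranspose_mul_self,
        re_trace_conjTranspose_mul_self]

end Frobenius

lemma trace_conjTranspose_mul_self_mul_mul_conjTranspose (B : Matrix m n 𝕜) (C : Matrix n n 𝕜) :
    ((B * C * Bᴴ)ᴴ * (B * C * Bᴴ)).trace = (Cᴴ * (Bᴴ * B) * C * (Bᴴ * B)).trace := by
  rw [← Matrix.mul_assoc _ Bᴴ B, trace_mul_comm _ B]
  simp only [conjTranspose_mul, conjTranspose_conjTranspose, Matrix.mul_assoc]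

lemma re_trace_mul_mul_mul_le_sq_of_posSemidef {A ρ : Matrix n n 𝕜} (hA : A.PosSemidef)
    (hρ : ρ.PosSemidef) :
    RCLike.re (A * ρ * A * ρ).trace ≤ RCLike.re (A * ρ).trace ^ 2 := by
  obtain ⟨B, rfl⟩ := exists_eq_conjTranspose_mul_self_of_posSemidef hρ
  have hP : (B * A * Bᴴ).PosSemidef := hA.mul_mul_conjTranspose_same B
  have trace_eq : (A * (Bᴴ * B)).trace = (B * A * Bᴴ).trace := by
    rw [← Matrix.mul_assoc, trace_mul_cycle]
  have trace_sq_eq : (A * (Bᴴ * B) * A * (Bᴴ * B)).trace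
      = (B * A * Bᴴ * (B * A * Bᴴ)).trace := by
    simpa only [hP.isHermitian.eq, hA.isHermitian.eq] using
      (trace_conjTranspose_mul_self_mul_mul_conjTranspose B A).symm
  rw [trace_eq, trace_sq_eq, sq]
  exact re_trace_mul_le_of_posSemidef hP hP

variable [DecidableEq n]

lemma norm_trace_mul_sq_le_of_posDef {ρ : Matrix n n 𝕜} (hρ : ρ.PosDef) (A M : Matrix n n 𝕜) :
    ‖(A * M).trace‖ ^ 2 ≤
      RCLike.re (A * ρ * Aᴴ * ρ).trace * RCLike.re (Mᴴ * ρ⁻¹ * M * ρ⁻¹).trace := by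
  obtain ⟨B, rfl⟩ := exists_eq_conjTranspose_mul_self_of_posSemidef hρ.posSemidef
  have hB : IsUnit B.det := (isUnit_iff_isUnit_det B).mp (isUnit_of_mul_isUnit_right hρ.isUnit)
  have inv_eq : (Bᴴ * B)⁻¹ = (B⁻¹)ᴴᴴ * (B⁻¹)ᴴ := by
    rw [Matrix.mul_inv_rev, conjTranspose_conjTranspose, conjTranspose_nonsing_inv]
  have hB_inv : Bᴴ * (B⁻¹)ᴴ = 1 := by
    rw [← conjTranspose_mul, nonsing_inv_mul B hB, conjTranspose_one]
  have trace_eq : (A * M).trace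
      = ((B * Aᴴ * Bᴴ)ᴴ * ((B⁻¹)ᴴ * M * (B⁻¹)ᴴᴴ)).trace := by
    calc (A * M).trace = (B * (A * M) * B⁻¹).trace := by
          rw [trace_mul_cycle, nonsing_inv_mul B hB, Matrix.one_mul]
      _ = (B * A * (Bᴴ * (B⁻¹)ᴴ) * M * B⁻¹).trace := by
          rw [hB_inv, Matrix.mul_one, Matrix.mul_assoc B A M]
      _ = ((B * Aᴴ * Bᴴ)ᴴ * ((B⁻¹)ᴴ * M * (B⁻¹)ᴴᴴ)).trace := by
          simp only [conjTranspose_mul, conjTranspose_conjTranspose, Matrix.mul_assoc]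
  have cauchy_schwarz :=
    norm_trace_conjTranspose_mul_sq_le (B * Aᴴ * Bᴴ) ((B⁻¹)ᴴ * M * (B⁻¹)ᴴᴴ)
  rwa [← trace_eq, trace_conjTranspose_mul_self_mul_mul_conjTranspose,
    trace_conjTranspose_mul_self_mul_mul_conjTranspose,
    ← inv_eq, conjTranspose_conjTranspose] at cauchy_schwarz

theorem hessian_loss_le_hessian_logDet_general {ρ A : Matrix n n 𝕜} (hρ : ρ.PosDef)
    (hA : A.PosSemidef) (M : Matrix n n 𝕜) :
    ‖(A * M).trace‖ ^ 2 ≤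
      RCLike.re (A * ρ).trace ^ 2 * RCLike.re (Mᴴ * ρ⁻¹ * M * ρ⁻¹).trace := by
  have nonneg : 0 ≤ RCLike.re (Mᴴ * ρ⁻¹ * M * ρ⁻¹).trace :=
    re_trace_mul_nonneg_of_posSemidef (hρ.inv.posSemidef.conjTranspose_mul_mul_same M)
      hρ.inv.posSemidef
  calc ‖(A * M).trace‖ ^ 2
      ≤ RCLike.re (A * ρ * A * ρ).trace * RCLike.re (Mᴴ * ρ⁻¹ * M * ρ⁻¹).trace := by
        simpa only [hA.isHermitian.eq] using norm_trace_mul_sq_le_of_posDef hρ A M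
    _ ≤ RCLike.re (A * ρ).trace ^ 2 * RCLike.re (Mᴴ * ρ⁻¹ * M * ρ⁻¹).trace := by
        gcongr
        exact re_trace_mul_mul_mul_le_sq_of_posSemidef hA hρ.posSemidef

end HilbertSchmidt

/-- For a Hermitian positive definite `ρ`, a Hermitian positive semi-definite `A` with
`tr(Aρ) > 0`, and any Hermitian `M`:
`(tr(AM))² / (tr(Aρ))² ≤ tr(Mρ⁻¹Mρ⁻¹)`, i.e. the Hessian of `-log tr(A·)` is dominated by
the Hessian of `-log det`. -/
theorem hessian_loss_le_hessian_logDet {d : ℕ} (ρ A M : Matrix (Fin d) (Fin d) ℂ)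
    (hρ : ρ.PosDef) (hA : A.PosSemidef) (htr : 0 < (Matrix.trace (A * ρ)).re)
    (hM : M.IsHermitian) :
    (Matrix.trace (A * M)).re ^ 2 / (Matrix.trace (A * ρ)).re ^ 2 ≤
      (Matrix.trace (M * ρ⁻¹ * M * ρ⁻¹)).re := by
  have norm_bound := hM.eq ▸ hessian_loss_le_hessian_logDet_general hρ hA M
  exact (div_le_iff₀' (pow_pos htr 2)).2 <|
    (sq_le_sq.2 <| by simpa only [abs_norm] using Complex.abs_re_le_norm _).trans norm_bound
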